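/- Let G be a connected finite simple graph on vertex set V = {v_1,...,v_n}. Then a vector x = (x_1,...,x_n) ∈ R^n belongs to the edge cone R+A of G if and only if x_i ≥ 0 for i = 1,...,n and ∑_{v_i ∈ A} x_i ≤ ∑_{v_i ∈ N(A)} x_i for every independent set of vertices A of G. -/

import Mathlib

open Finset

/-- The edge vector `e_i + e_j` associated to an edge `{i, j}`. -/
def edgeVector {V : Type*} [DecidableEq V] (i j : V) : V → ℝ :=
  fun k => (if k = i then 1 else 0) + (if k = j then 1 else 0)

/-- The edge cone of a graph `G`: all nonnegative real linear combinations of the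
edge vectors of `G`. -/
def edgeCone {V : Type*} [Fintype V] [DecidableEq V] (G : SimpleGraph V) :
    Set (V → ℝ) :=
  { x | ∃ c : V → V → ℝ, (∀ i j, 0 ≤ c i j) ∧ (∀ i j, ¬ G.Adj i j → c i j = 0) ∧
        x = ∑ i, ∑ j, c i j • edgeVector i j }

/-- The neighbor set `N(A)`: vertices adjacent to at least one vertex of `A`. -/
def nbr {V : Type*} [Fintype V] [DecidableEq V] (G : SimpleGraph V)
    [DecidableRel G.Adj] (A : Finset V) : Finset V :=
  Finset.univ.filter fun v => ∃ a ∈ A, G.Adj v a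

/-- `A` is an independent set of vertices of `G`. -/
def IsIndep {V : Type*} (G : SimpleGraph V) (A : Finset V) : Prop :=
  ∀ a ∈ A, ∀ b ∈ A, ¬ G.Adj a b

/-- `F` is a face of the cone `Q`: `F = Q ∩ {x | ⟪x, a⟫ = 0}` for some `a` with
`Q ⊆ {x | ⟪x, a⟫ ≤ 0}`. -/
def IsFace {V : Type*} [Fintype V] (Q F : Set (V → ℝ)) : Prop :=
  ∃ a : V → ℝ, (∀ x ∈ Q, ∑ i, x i * a i ≤ 0) ∧ F = Q ∩ {x | ∑ i, x i * a i = 0}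

/-- `F` is a facet of the cone `Q`: a face whose linear span has dimension one less
than the dimension of the linear span of `Q`. -/
def IsFacet {V : Type*} [Fintype V] (Q F : Set (V → ℝ)) : Prop :=
  IsFace Q F ∧
    Module.finrank ℝ (Submodule.span ℝ F) = Module.finrank ℝ (Submodule.span ℝ Q) - 1

/-!
By Farkas' lemma, `x` lies in the edge cone if and only if `0 ≤ x ⬝ᵥ a` for every `a` whose
values at the two ends of each edge have nonnegative sum. Nonnegativity of the coordinates and the
inequalities for the sets `A` are the cases `a = 1_{i}` and `a = 1_{N(A)} - 1_A`. Conversely, for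
such an `a` and a level `t > 0`, the set `A` of vertices with `a ≤ -t` is independent and `t ≤ a` on
`N(A)`; integrating the inequalities for these sets over `t` gives `0 ≤ x ⬝ᵥ a`.
-/

open MeasureTheory

section Farkas

theorem exists_nonneg_sum_insert_smul_eq {ι R M : Type*} [DecidableEq ι] [Semiring R] [LE R]
    [AddCommMonoid M] [Module R M] {s : Finset ι} {j : ι} (hj : j ∉ s) (v : ι → M) {r : R}
    (hr : 0 ≤ r) {c : ι → R} (hc : ∀ i, 0 ≤ c i) :
    ∃ d : ι → R, (∀ i, 0 ≤ d i) ∧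
      ∑ i ∈ insert j s, d i • v i = r • v j + ∑ i ∈ s, c i • v i := by
  refine ⟨Function.update c j r, fun i => ?_, ?_⟩
  · rw [Function.update_apply]
    split_ifs
    exacts [hr, hc i]
  · rw [sum_insert hj, Function.update_self]
    congr 1
    exact sum_congr rfl fun i hi => by rw [Function.update_of_ne (ne_of_mem_of_not_mem hi hj)]

section Projection

variable {𝕜 E : Type*} [Field 𝕜] [AddCommGroup E] [Module 𝕜 E]

/-- The projection of `E` along `z` onto the kernel of the functional `f`, used to eliminate `f` in
the proof of Farkas' lemma. If `f z = 0`, it is the identity. -/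
def kerProjection (f : Module.Dual 𝕜 E) (z : E) : E →ₗ[𝕜] E :=
  LinearMap.id - f.smulRight ((f z)⁻¹ • z)

theorem apply_kerProjection (f g : Module.Dual 𝕜 E) (y z : E) :
    g (kerProjection f z y) = g y - f y * (g z / f z) := by
  simp [kerProjection, div_eq_inv_mul]

theorem eq_smul_add_of_comp_kerProjection_eq {f g h : Module.Dual 𝕜 E} {z : E}
    (hgh : g ∘ₗ kerProjection f z = h ∘ₗ kerProjection f z) :
    h = ((h z - g z) / f z) • f + g := by
  ext y
  have hy : g (kerProjection f z y) = h (kerProjection f z y) := LinearMap.congr_fun hgh y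
  simp only [apply_kerProjection] at hy
  simp only [LinearMap.add_apply, LinearMap.smul_apply, smul_eq_mul]
  linear_combination -hy

end Projection

variable {ι 𝕜 E : Type*} [Field 𝕜] [LinearOrder 𝕜] [IsStrictOrderedRing 𝕜] [AddCommGroup E]
  [Module 𝕜 E]

theorem exists_nonneg_sum_smul_eq_of_forall_nonneg (s : Finset ι) (a : ι → Module.Dual 𝕜 E)
    (b : Module.Dual 𝕜 E) (hb : ∀ y, (∀ i ∈ s, 0 ≤ a i y) → 0 ≤ b y) :
    ∃ c : ι → 𝕜, (∀ i, 0 ≤ c i) ∧ ∑ i ∈ s, c i • a i = b := by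
  classical
  induction s using Finset.induction_on generalizing a b with
  | empty =>
    refine ⟨0, fun _ => le_rfl, LinearMap.ext fun y => le_antisymm ?_ ?_⟩
    · simpa using hb y (by simp)
    · simpa using hb (-y) (by simp)
  | insert j s hj ih =>
    by_cases hbs : ∀ y, (∀ i ∈ s, 0 ≤ a i y) → 0 ≤ b y
    · obtain ⟨c, hc, hbc⟩ := ih a b hbs
      simpa [hbc] using exists_nonneg_sum_insert_smul_eq hj a le_rfl hc
    · push Not at hbs
      obtain ⟨z, hz, hbz⟩ := hbs
      have hjz : a j z < 0 := by
        by_contra! hjz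
        exact hbz.not_ge (hb z (forall_mem_insert _ _ _ |>.2 ⟨hjz, hz⟩))
      -- After projecting along `z`, the constraint `0 ≤ a j y` holds automatically.
      let π := kerProjection (a j) z
      have hπ (y : E) : a j (π y) = 0 := by simp [π, apply_kerProjection, hjz.ne]
      obtain ⟨c, hc, hbc⟩ := ih (fun i => a i ∘ₗ π) (b ∘ₗ π) fun y hy =>
        hb (π y) (forall_mem_insert _ _ _ |>.2 ⟨(hπ y).ge, hy⟩)
      let g := ∑ i ∈ s, c i • a i
      have hg : g ∘ₗ π = b ∘ₗ π := by
        ext y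
        simpa [g] using LinearMap.congr_fun hbc y
      have hgz : 0 ≤ g z := by
        simpa [g] using sum_nonneg fun i hi => mul_nonneg (hc i) (hz i hi)
      have hr : 0 ≤ (b z - g z) / a j z :=
        div_nonneg_of_nonpos (sub_nonpos.2 (hbz.le.trans hgz)) hjz.le
      obtain ⟨d, hd, hdsum⟩ := exists_nonneg_sum_insert_smul_eq hj a hr hc
      exact ⟨d, hd, hdsum.trans (eq_smul_add_of_comp_kerProjection_eq hg).symm⟩

end Farkas

section LayerCake

variable {ι : Type*}

theorem ite_le_eq_indicator_Iic {α β : Type*} [Preorder α] [DecidableLE α] [Zero β] (w : β)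
    (a : α) : (fun t => if t ≤ a then w else 0) = (Set.Iic a).indicator fun _ => w := by
  ext; simp [Set.indicator]

theorem integrableOn_Ioi_ite_le (w a : ℝ) :
    IntegrableOn (fun t => if t ≤ a then w else 0) (Set.Ioi 0) := by
  rw [ite_le_eq_indicator_Iic, integrableOn_indicator_iff measurableSet_Iic, Set.Iic_inter_Ioi]
  exact integrableOn_const (by simp)

theorem setIntegral_Ioi_ite_le (w a : ℝ) :
    ∫ t in Set.Ioi 0, (if t ≤ a then w else 0) = w * a⁺ := by
  rw [ite_le_eq_indicator_Iic, setIntegral_indicator measurableSet_Iic, Set.Ioi_inter_Iic,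
    setIntegral_const, Real.volume_real_Ioc, sub_zero, smul_eq_mul, mul_comm, posPart_def]

theorem integrableOn_Ioi_sum_filter_le (s : Finset ι) (w f : ι → ℝ) :
    IntegrableOn (fun t => ∑ i ∈ s with t ≤ f i, w i) (Set.Ioi 0) := by
  simp only [sum_filter]
  exact integrable_finsetSum s fun i _ => integrableOn_Ioi_ite_le (w i) (f i)

theorem setIntegral_Ioi_sum_filter_le (s : Finset ι) (w f : ι → ℝ) :
    ∫ t in Set.Ioi 0, ∑ i ∈ s with t ≤ f i, w i = ∑ i ∈ s, w i * (f i)⁺ := by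
  simp only [sum_filter]
  rw [integral_finsetSum s fun i _ => integrableOn_Ioi_ite_le (w i) (f i)]
  exact sum_congr rfl fun i _ => setIntegral_Ioi_ite_le (w i) (f i)

theorem sum_mul_posPart_le_sum_mul_posPart {s : Finset ι} {w f g : ι → ℝ}
    (h : ∀ t > 0, ∑ i ∈ s with t ≤ f i, w i ≤ ∑ i ∈ s with t ≤ g i, w i) :
    ∑ i ∈ s, w i * (f i)⁺ ≤ ∑ i ∈ s, w i * (g i)⁺ := by
  simp only [← setIntegral_Ioi_sum_filter_le]
  exact setIntegral_mono_on (integrableOn_Ioi_sum_filter_le s w f)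
    (integrableOn_Ioi_sum_filter_le s w g) measurableSet_Ioi h

end LayerCake

section EdgeCone

variable {V : Type*} [Fintype V] {G : SimpleGraph V} {x a : V → ℝ}

theorem isIndep_filter_le_neg {t : ℝ} (ht : 0 < t) (ha : ∀ i j, G.Adj i j → 0 ≤ a i + a j) :
    IsIndep G {i | t ≤ -a i} := fun i hi j hj hij => by
  have hi' : t ≤ -a i := by simpa using hi
  have hj' : t ≤ -a j := by simpa using hj
  linarith [ha i j hij]

variable [DecidableEq V]

theorem edgeVector_dotProduct (i j : V) (a : V → ℝ) : edgeVector i j ⬝ᵥ a = a i + a j := by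
  simp [edgeVector, dotProduct, add_mul, sum_add_distrib]

theorem dotProduct_nonneg_of_mem_edgeCone (hx : x ∈ edgeCone G)
    (ha : ∀ i j, G.Adj i j → 0 ≤ a i + a j) : 0 ≤ x ⬝ᵥ a := by
  obtain ⟨c, hc, hc0, rfl⟩ := hx
  simp only [sum_dotProduct, smul_dotProduct, edgeVector_dotProduct, smul_eq_mul]
  refine sum_nonneg fun i _ => sum_nonneg fun j _ => ?_
  by_cases hij : G.Adj i j
  · exact mul_nonneg (hc i j) (ha i j hij)
  · rw [hc0 i j hij, zero_mul]

theorem mem_edgeCone_of_forall_dotProduct_nonneg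
    (hx : ∀ a : V → ℝ, (∀ i j, G.Adj i j → 0 ≤ a i + a j) → 0 ≤ x ⬝ᵥ a) : x ∈ edgeCone G := by
  classical
  obtain ⟨c, hc, hxc⟩ := exists_nonneg_sum_smul_eq_of_forall_nonneg
    {p : V × V | G.Adj p.1 p.2} (fun p => dotProductBilin ℝ ℝ (edgeVector p.1 p.2))
    (dotProductBilin ℝ ℝ x) (by simpa [edgeVector_dotProduct] using hx)
  have hsum : x = ∑ p : V × V with G.Adj p.1 p.2, c p • edgeVector p.1 p.2 := by
    ext k
    simpa using (LinearMap.congr_fun hxc (Pi.single k 1)).symm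
  refine ⟨fun i j => if G.Adj i j then c (i, j) else 0, fun i j => ite_nonneg (hc (i, j)) le_rfl,
    fun i j hij => if_neg hij, ?_⟩
  simp only [hsum, sum_filter, Fintype.sum_prod_type, ite_smul, zero_smul]

theorem nonneg_of_mem_edgeCone (hx : x ∈ edgeCone G) (i : V) : 0 ≤ x i := by
  have hsingle : (0 : V → ℝ) ≤ Pi.single i 1 := Pi.single_nonneg.2 zero_le_one
  have h : 0 ≤ x ⬝ᵥ Pi.single i 1 := dotProduct_nonneg_of_mem_edgeCone hx fun j k _ =>
    add_nonneg (hsingle j) (hsingle k)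
  simpa using h

variable [DecidableRel G.Adj]

theorem mem_nbr {A : Finset V} {v : V} : v ∈ nbr G A ↔ ∃ w ∈ A, G.Adj v w := by
  simp [nbr]

theorem sum_le_sum_nbr_of_mem_edgeCone (hx : x ∈ edgeCone G) (A : Finset V) :
    ∑ i ∈ A, x i ≤ ∑ i ∈ nbr G A, x i := by
  let χ (B : Finset V) (i : V) : ℝ := if i ∈ B then 1 else 0
  have hχ : ∀ i j, G.Adj i j → χ A i ≤ χ (nbr G A) j := fun i j hij => by
    by_cases hi : i ∈ A
    · simp [χ, hi, mem_nbr.2 ⟨i, hi, hij.symm⟩]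
    · by_cases hj : j ∈ nbr G A <;> simp [χ, hi, hj]
  have h : 0 ≤ x ⬝ᵥ (χ (nbr G A) - χ A) := dotProduct_nonneg_of_mem_edgeCone hx fun i j hij => by
    simp only [Pi.sub_apply]
    linarith [hχ i j hij, hχ j i hij.symm]
  rw [dotProduct_sub] at h
  simpa [dotProduct, χ] using h

theorem nbr_filter_le_neg_subset (t : ℝ) (ha : ∀ i j, G.Adj i j → 0 ≤ a i + a j) :
    nbr G {i | t ≤ -a i} ⊆ ({i | t ≤ a i} : Finset V) := fun i hi => by
  obtain ⟨j, hj, hij⟩ := mem_nbr.1 hi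
  rw [mem_filter_univ] at hj ⊢
  linarith [ha i j hij]

theorem dotProduct_nonneg_of_sum_le_sum_nbr (hx : ∀ i, 0 ≤ x i)
    (hA : ∀ A : Finset V, IsIndep G A → ∑ i ∈ A, x i ≤ ∑ i ∈ nbr G A, x i)
    (ha : ∀ i j, G.Adj i j → 0 ≤ a i + a j) : 0 ≤ x ⬝ᵥ a := by
  have hle : ∑ i, x i * (-a i)⁺ ≤ ∑ i, x i * (a i)⁺ :=
    sum_mul_posPart_le_sum_mul_posPart fun t ht => calc
      ∑ i with t ≤ -a i, x i ≤ ∑ i ∈ nbr G {i | t ≤ -a i}, x i :=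
        hA _ (isIndep_filter_le_neg ht ha)
      _ ≤ ∑ i with t ≤ a i, x i :=
        sum_le_sum_of_subset_of_nonneg (nbr_filter_le_neg_subset t ha) fun i _ _ => hx i
  calc 0 ≤ ∑ i, x i * (a i)⁺ - ∑ i, x i * (-a i)⁺ := sub_nonneg.2 hle
    _ = x ⬝ᵥ a := by
      simp only [posPart_neg, ← sum_sub_distrib, ← mul_sub, posPart_sub_negPart, dotProduct]

end EdgeCone

theorem stmt3_general {V : Type*} [Fintype V] [DecidableEq V] (G : SimpleGraph V)
    [DecidableRel G.Adj] (x : V → ℝ) :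
    x ∈ edgeCone G ↔
      (∀ i, 0 ≤ x i) ∧
      ∀ A : Finset V, IsIndep G A → ∑ i ∈ A, x i ≤ ∑ i ∈ nbr G A, x i := by
  constructor
  · exact fun hx => ⟨nonneg_of_mem_edgeCone hx, fun A _ => sum_le_sum_nbr_of_mem_edgeCone hx A⟩
  · rintro ⟨hx, hA⟩
    exact mem_edgeCone_of_forall_dotProduct_nonneg fun a =>
      dotProduct_nonneg_of_sum_le_sum_nbr hx hA

/-- For a connected graph `G`, a vector `x ∈ ℝⁿ` belongs to the edge cone of `G` if and
only if `x_i ≥ 0` for all `i` and `∑_{v_i ∈ A} x_i ≤ ∑_{v_i ∈ N(A)} x_i` for every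
independent set of vertices `A` of `G`. -/
theorem stmt3 {n : ℕ} (G : SimpleGraph (Fin n)) [DecidableRel G.Adj]
    (hG : G.Connected) (x : Fin n → ℝ) :
    x ∈ edgeCone G ↔
      (∀ i, 0 ≤ x i) ∧
      ∀ A : Finset (Fin n), IsIndep G A → ∑ i ∈ A, x i ≤ ∑ i ∈ nbr G A, x i :=
  stmt3_general G x
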